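/- The invariant subalgebra K(1)^{D₆} has the following bigraded dimensions over ℚ: its components of bidegree (0,0), (2,1), (10,1), and (12,2) are each one-dimensional, and all other bigraded components are zero; equivalently, its Hilbert–Poincaré series is 1 + s²t + s¹⁰t + s¹²t². -/

import Mathlib

/-!
The dimensions are bounded above with the averaging operator of `S₃` and below by one product.

*Structure of `A`.* Write `p_k = x^k + y^k + w^k`. From `p₁ = p₂ = 0` one gets
`xy + yw + wx = 0`, hence `x³ = y³ = w³`, and then `p₆ = 0`
gives `x⁶ = y⁶ = w⁶ = 0`. The part of `A` of polynomial degree `k` is spanned by `x^k` and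
`x^(k-1)(y − w)` (`monomial_mem_S`), which are symmetric and antisymmetric under `y ↔ w`.

*Upper bounds.* The automorphism `a³` acts by `(−1)^(k+q)` on bidegree `(2k, q)`, so invariants occur
only for `k + q` even. An invariant is one sixth of its own Reynolds sum `rey`, and in each
exterior degree the symmetry kills one of the two spanning elements:

* `q = 0`: only the multiples of `p_k` survive (`inf_le_zero`), and `p₂ = p₄ = 0`, `p_k = 0` for
  `k ≥ 6`;
* `q = 1`: one may take `α` as exterior generator, and only the multiples of
  `Z k = x^k α + y^k β + w^k γ` survive (`inf_le_one`); here `Z 3 = x³(α + β + γ) = 0` and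
  `Z k = 0` for `k ≥ 6`;
* `q = 2`: `S₃` acts on `α ∧ β` by the sign, so only the multiples of `W k ⊗ α ∧ β` survive
  (`inf_le_two`), and `W k = 0` for `k = 0, 2, 4` and `k ≥ 7`;
* `q ≥ 3`: the component is zero, because `V` has dimension two.

*Lower bounds.* One computes `Z 1 * Z 5 = −6 x⁵y ⊗ α ∧ β`. This is nonzero: `α ∧ β` is detected by a
determinant, and `x⁵y ∉ J` follows by restricting to the lines `(T, ζT, ζ²T)` for the two primitive
cube roots of unity `ζ` (`lineMap_coeff_six_of_mem`). Hence `1`, `Z 1`, `Z 5` and `Z 1 * Z 5` are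
nonzero invariants, in bidegrees `(0,0)`, `(2,1)`, `(10,1)` and `(12,2)`.
-/

set_option synthInstance.maxHeartbeats 1000000
set_option maxHeartbeats 1000000

open MvPolynomial
open scoped TensorProduct

noncomputable section

abbrev P3 : Type := MvPolynomial (Fin 3) ℚ

def Jid : Ideal P3 :=
  Ideal.span {X 0 + X 1 + X 2, X 0 ^ 2 + X 1 ^ 2 + X 2 ^ 2, X 0 ^ 6 + X 1 ^ 6 + X 2 ^ 6}

abbrev Aq : Type := P3 ⧸ Jid

def mkA : P3 →ₐ[ℚ] Aq := Ideal.Quotient.mkₐ ℚ Jid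

lemma rename_sum_pow (σ : Equiv.Perm (Fin 3)) (k : ℕ) :
    rename σ ((X 0 : P3) ^ k + X 1 ^ k + X 2 ^ k) = (X 0 : P3) ^ k + X 1 ^ k + X 2 ^ k := by
  have h : ((X 0 : P3) ^ k + X 1 ^ k + X 2 ^ k) = ∑ i, (X i : P3) ^ k := by
    simp [Fin.sum_univ_three]
  rw [h, map_sum]
  simp only [map_pow, rename_X]
  exact Fintype.sum_equiv σ _ _ fun i => rfl

lemma rename_mem_J (σ : Equiv.Perm (Fin 3)) {p : P3} (hp : p ∈ Jid) :
    rename σ p ∈ Jid := by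
  have hle : Jid.map (rename σ : P3 →ₐ[ℚ] P3).toRingHom ≤ Jid := by
    rw [Jid, Ideal.map_span, Ideal.span_le]
    rintro q ⟨r, hr, rfl⟩
    simp only [Set.mem_insert_iff, Set.mem_singleton_iff] at hr
    have h1 := rename_sum_pow σ 1
    simp only [pow_one] at h1
    rcases hr with rfl | rfl | rfl
    · exact Ideal.subset_span (by simp only [AlgHom.toRingHom_eq_coe, RingHom.coe_coe, h1]; left; rfl)
    · exact Ideal.subset_span (by
        simp only [AlgHom.toRingHom_eq_coe, RingHom.coe_coe, rename_sum_pow σ 2]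
        right; left; rfl)
    · exact Ideal.subset_span (by
        simp only [AlgHom.toRingHom_eq_coe, RingHom.coe_coe, rename_sum_pow σ 6]
        right; right; rfl)
  exact hle (Ideal.mem_map_of_mem _ hp)

def permAq (σ : Equiv.Perm (Fin 3)) : Aq →ₐ[ℚ] Aq :=
  Ideal.Quotient.liftₐ Jid (mkA.comp (rename σ)) (fun p hp => by
    simp only [AlgHom.comp_apply, mkA, Ideal.Quotient.mkₐ_eq_mk]
    exact Ideal.Quotient.eq_zero_iff_mem.mpr (rename_mem_J σ hp))

def negP : P3 →ₐ[ℚ] P3 := aeval (fun i => -X i)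

lemma negP_mem_J {p : P3} (hp : p ∈ Jid) : negP p ∈ Jid := by
  have hle : Jid.map negP.toRingHom ≤ Jid := by
    rw [Jid, Ideal.map_span, Ideal.span_le]
    rintro q ⟨r, hr, rfl⟩
    simp only [Set.mem_insert_iff, Set.mem_singleton_iff] at hr
    rcases hr with rfl | rfl | rfl
    · have : negP ((X 0 : P3) + X 1 + X 2) = -(X 0 + X 1 + X 2) := by
        simp [negP]; try ring
      simp only [AlgHom.toRingHom_eq_coe, RingHom.coe_coe, this]
      exact neg_mem (Ideal.subset_span (by left; rfl))
    · have : negP ((X 0 : P3) ^ 2 + X 1 ^ 2 + X 2 ^ 2) = X 0 ^ 2 + X 1 ^ 2 + X 2 ^ 2 := by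
        simp [negP]; try ring
      simp only [AlgHom.toRingHom_eq_coe, RingHom.coe_coe, this]
      exact Ideal.subset_span (by right; left; rfl)
    · have : negP ((X 0 : P3) ^ 6 + X 1 ^ 6 + X 2 ^ 6) = X 0 ^ 6 + X 1 ^ 6 + X 2 ^ 6 := by
        simp [negP]; try ring
      simp only [AlgHom.toRingHom_eq_coe, RingHom.coe_coe, this]
      exact Ideal.subset_span (by right; right; rfl)
  exact hle (Ideal.mem_map_of_mem _ hp)

def negAq : Aq →ₐ[ℚ] Aq :=
  Ideal.Quotient.liftₐ Jid (mkA.comp negP) (fun p hp => by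
    simp only [AlgHom.comp_apply, mkA, Ideal.Quotient.mkₐ_eq_mk]
    exact Ideal.Quotient.eq_zero_iff_mem.mpr (negP_mem_J hp))

def Vsub : Submodule ℚ (Fin 3 → ℚ) := Submodule.span ℚ {fun _ => (1 : ℚ)}

abbrev Vq : Type := (Fin 3 → ℚ) ⧸ Vsub

def vGen (i : Fin 3) : Vq := Submodule.Quotient.mk (Pi.single i 1)

abbrev Em (m : ℕ) : Type := ExteriorAlgebra ℚ (Fin m → Vq)

def eGen (m : ℕ) (j : Fin m) (i : Fin 3) : Em m :=
  ExteriorAlgebra.ι ℚ (Pi.single j (vGen i))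

def prodGen (m : ℕ) (i : Fin 3) (I : Finset (Fin m)) : Em m :=
  ((I.sort (· ≤ ·)).map (fun j => eGen m j i)).prod

def extHom {m : ℕ} (g : (Fin m → Vq) →ₗ[ℚ] (Fin m → Vq)) : Em m →ₐ[ℚ] Em m :=
  ExteriorAlgebra.lift ℚ ⟨(ExteriorAlgebra.ι ℚ).comp g, fun v => by
    simpa using ExteriorAlgebra.ι_sq_zero (g v)⟩

def permV (σ : Equiv.Perm (Fin 3)) : Vq →ₗ[ℚ] Vq :=
  Submodule.mapQ Vsub Vsub (LinearMap.funLeft ℚ ℚ ⇑σ⁻¹) (by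
    rw [Vsub, Submodule.span_le]
    rintro v rfl
    exact Submodule.mem_comap.mpr (Submodule.subset_span rfl))

abbrev Kk (m : ℕ) : Type := Aq ⊗[ℚ] Em m

def zz (m : ℕ) (d : ℕ) (I : Finset (Fin m)) : Kk m :=
  mkA (X 0 ^ d) ⊗ₜ[ℚ] prodGen m 0 I + mkA (X 1 ^ d) ⊗ₜ[ℚ] prodGen m 1 I +
    mkA (X 2 ^ d) ⊗ₜ[ℚ] prodGen m 2 I

def zS (m : ℕ) (i : ℕ) (I : Finset (Fin m)) : Kk m := zz m (i - 1) I

/-- The algebra endomorphism of `K(m)` given by the element of `S₃ ⊆ D₆` corresponding to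
the permutation `σ`: it simultaneously permutes `(x,y,w)` and each triple `(α_j,β_j,γ_j)`. -/
def permK (m : ℕ) (σ : Equiv.Perm (Fin 3)) : Kk m →ₐ[ℚ] Kk m :=
  Algebra.TensorProduct.map (permAq σ) (extHom (LinearMap.compLeft (permV σ) (Fin m)))

/-- The algebra endomorphism of `K(m)` given by the central element `a³` of `D₆`: it
multiplies each of `x, y, w, α_j, β_j, γ_j` by `−1`. -/
def negK (m : ℕ) : Kk m →ₐ[ℚ] Kk m :=
  Algebra.TensorProduct.map negAq (extHom (-LinearMap.id))

/-- The set of `D₆`-invariants of `K(m)`: since `D₆` is generated by the subgroup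
`⟨a²,b⟩ ≅ S₃` together with the central element `a³`, these are the elements fixed by all
the simultaneous permutations and by the sign automorphism. -/
def invD6 (m : ℕ) : Set (Kk m) :=
  {z | (∀ σ : Equiv.Perm (Fin 3), permK m σ z = z) ∧ negK m z = z}

/-- The set of `S₃`-invariants of `K(m)`, for the subgroup `⟨a²,b⟩ ≅ S₃` of `D₆`. -/
def invS3 (m : ℕ) : Set (Kk m) :=
  {z | ∀ σ : Equiv.Perm (Fin 3), permK m σ z = z}

/-- The bidegree-`(p,q)` component of the bigraded algebra `K(m)` (with `x, y, w` of
bidegree `(2,0)` and each `α_j, β_j, γ_j` of bidegree `(0,1)`): the ℚ-span of the images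
of the bihomogeneous monomials of bidegree `(p,q)`. -/
def component (m p q : ℕ) : Submodule ℚ (Kk m) :=
  Submodule.span ℚ {z : Kk m | ∃ (a b c : ℕ) (l : List (Fin m × Fin 3)),
    2 * (a + b + c) = p ∧ l.length = q ∧
    z = mkA (X 0 ^ a * X 1 ^ b * X 2 ^ c) ⊗ₜ[ℚ] (l.map fun pr => eGen m pr.1 pr.2).prod}

/-- The `D₆`-invariants of `K(m)`, as a ℚ-submodule. -/
def invD6Submodule (m : ℕ) : Submodule ℚ (Kk m) where
  carrier := invD6 m
  add_mem' := by
    rintro a b ⟨ha1, ha2⟩ ⟨hb1, hb2⟩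
    exact ⟨fun σ => by rw [map_add, ha1 σ, hb1 σ], by rw [map_add, ha2, hb2]⟩
  zero_mem' := ⟨fun σ => map_zero _, map_zero _⟩
  smul_mem' := by
    rintro c a ⟨h1, h2⟩
    exact ⟨fun σ => by rw [map_smul, h1 σ], by rw [map_smul, h2]⟩

/-! ### Power sums of three elements with `p₁ = p₂ = 0` -/

section RingFacts
variable {R : Type*} [CommRing R] [Algebra ℚ R] {a b c : R}

lemma eq_zero_of_natCast_mul_eq_zero {t : R} (n : ℕ) (hn : n ≠ 0) (h : (n : R) * t = 0) :
    t = 0 := by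
  have h' : (n : ℚ) • t = 0 := by rw [Algebra.smul_def, map_natCast, h]
  rcases smul_eq_zero.mp h' with h | h
  · exact absurd (by exact_mod_cast h) hn
  · exact h

/-- The second elementary symmetric function vanishes: `c` is eliminated using `a + b + c = 0`. -/
lemma quad_rel (h1 : a + b + c = 0) (h2 : a ^ 2 + b ^ 2 + c ^ 2 = 0) :
    b ^ 2 + a * b + a ^ 2 = 0 := by
  apply eq_zero_of_natCast_mul_eq_zero 2 (by norm_num)
  have : c = -a - b := by linear_combination h1
  subst this; push_cast; linear_combination h2

/-- The elements `a, b, c` have the same cube, since `b³ − a³ = (b − a)(b² + ab + a²)`. -/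
lemma cube_eq (h1 : a + b + c = 0) (h2 : a ^ 2 + b ^ 2 + c ^ 2 = 0) : b ^ 3 = a ^ 3 := by
  linear_combination (b - a) * quad_rel h1 h2

/-- As the three cubes agree, `a⁶ + b⁶ + c⁶ = 3a⁶`. -/
lemma sixth_zero (h1 : a + b + c = 0) (h2 : a ^ 2 + b ^ 2 + c ^ 2 = 0)
    (h6 : a ^ 6 + b ^ 6 + c ^ 6 = 0) : a ^ 6 = 0 := by
  apply eq_zero_of_natCast_mul_eq_zero 3 (by norm_num)
  have hb := cube_eq h1 h2
  have hc : c ^ 3 = a ^ 3 := cube_eq (a := a) (b := c) (c := b) (by linear_combination h1)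
    (by linear_combination h2)
  push_cast
  linear_combination h6 - (b ^ 3 + a ^ 3) * hb - (c ^ 3 + a ^ 3) * hc

/-- The coefficient of `α ∧ β` in `(xα + yβ + wγ)(x⁵α + y⁵β + w⁵γ)`, computed in the
top degree of `A`. -/
lemma top_one (h1 : a + b + c = 0) (h2 : a ^ 2 + b ^ 2 + c ^ 2 = 0)
    (h6 : a ^ 6 + b ^ 6 + c ^ 6 = 0) :
    a * b ^ 5 - a * c ^ 5 - b * a ^ 5 + b * c ^ 5 + c * a ^ 5 - c * b ^ 5 =
      (-6 : ℚ) • (a ^ 5 * b) := by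
  have hs : (-6 : ℚ) • (a ^ 5 * b) = -6 * (a ^ 5 * b) := by
    rw [Algebra.smul_def, map_neg, map_ofNat]
  rw [hs]
  have r := quad_rel h1 h2
  have s := sixth_zero h1 h2 h6
  have : c = -a - b := by linear_combination h1
  subst this
  clear h1 h2 h6
  grind

lemma p_four (h1 : a + b + c = 0) (h2 : a ^ 2 + b ^ 2 + c ^ 2 = 0) :
    a ^ 4 + b ^ 4 + c ^ 4 = 0 := by
  have hb := cube_eq h1 h2
  have hc : c ^ 3 = a ^ 3 := cube_eq (a := a) (b := c) (c := b) (by linear_combination h1)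
    (by linear_combination h2)
  linear_combination b * hb + c * hc + a ^ 3 * h1
end RingFacts

/-! ### Nonvanishing of `x⁵y` in `A` and of `α ∧ β` -/

section NonVanishing

lemma tmul_ne_zero_field {M N : Type*} [AddCommGroup M] [Module ℚ M] [AddCommGroup N] [Module ℚ N]
    {a : M} {e : N} (ha : a ≠ 0) (he : e ≠ 0) : a ⊗ₜ[ℚ] e ≠ 0 := by
  intro h
  obtain ⟨f, hf⟩ : ∃ f : Module.Dual ℚ M, f a ≠ 0 := by
    by_contra! H; exact ha ((Module.forall_dual_apply_eq_zero_iff ℚ a).mp H)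
  obtain ⟨g, hg⟩ : ∃ g : Module.Dual ℚ N, g e ≠ 0 := by
    by_contra! H; exact he ((Module.forall_dual_apply_eq_zero_iff ℚ e).mp H)
  have := congrArg (TensorProduct.lid ℚ ℚ ∘ TensorProduct.map f g) h
  simp [hf, hg] at this

/-- Restriction of a polynomial to the line `T ↦ (T, ζT, ζ²T)`, as a polynomial in `T`. -/
def lineMap (ζ : ℂ) : P3 →ₐ[ℚ] Polynomial ℂ :=
  aeval fun i => Polynomial.C (ζ ^ (i : ℕ)) * Polynomial.X

lemma lineMap_coeff_zero (ζ : ℂ) (p : P3) :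
    (lineMap ζ p).coeff 0 = algebraMap ℚ ℂ (constantCoeff p) := by
  induction p using MvPolynomial.induction_on with
  | C a => simp [lineMap, Polynomial.algebraMap_apply]
  | add p q hp hq => simp [hp, hq]
  | mul_X p i hp => simp [lineMap]

lemma lineMap_lin {ζ : ℂ} (h : ζ ^ 2 + ζ + 1 = 0) : lineMap ζ (X 0 + X 1 + X 2) = 0 := by
  have : Polynomial.C (ζ ^ 2 + ζ + 1) = 0 := by rw [h, map_zero]
  simp only [map_add, map_one, map_pow] at this
  simp [lineMap]
  linear_combination Polynomial.X * this

lemma lineMap_quad {ζ : ℂ} (h : ζ ^ 2 + ζ + 1 = 0) :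
    lineMap ζ (X 0 ^ 2 + X 1 ^ 2 + X 2 ^ 2) = 0 := by
  have : Polynomial.C (ζ ^ 2 + ζ + 1) = 0 := by rw [h, map_zero]
  simp only [map_add, map_one, map_pow] at this
  simp [lineMap]
  linear_combination Polynomial.X ^ 2 * (Polynomial.C ζ ^ 2 - Polynomial.C ζ + 1) * this

lemma lineMap_sextic {ζ : ℂ} (h : ζ ^ 2 + ζ + 1 = 0) :
    lineMap ζ (X 0 ^ 6 + X 1 ^ 6 + X 2 ^ 6) = 3 * Polynomial.X ^ 6 := by
  have h3 : ζ ^ 3 = 1 := by linear_combination (ζ - 1) * h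
  have : Polynomial.C (ζ ^ 3) = 1 := by rw [h3, map_one]
  simp only [map_pow] at this
  simp [lineMap]
  linear_combination Polynomial.X ^ 6 * (Polynomial.C ζ ^ 9 + Polynomial.C ζ ^ 6 +
    2 * Polynomial.C ζ ^ 3 + 2) * this

lemma coeff_six_aux (u v w : Polynomial ℂ) :
    (u * 0 + (v * 0 + w * (3 * Polynomial.X ^ 6))).coeff 6 = 3 * w.coeff 0 := by
  have : u * 0 + (v * 0 + w * (3 * Polynomial.X ^ 6)) =
      Polynomial.C 3 * (w * Polynomial.X ^ 6) := by
    rw [show (Polynomial.C (3 : ℂ)) = 3 from rfl]; ring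
  rw [this, Polynomial.coeff_C_mul, Polynomial.coeff_mul_X_pow']
  simp

/-- For `p ∈ J` the coefficient of `T⁶` along the line `(T, ζT, ζ²T)` is the same for both primitive
cube roots of unity `ζ`: the linear and quadratic generators vanish on that line, and the sextic one
restricts to `3T⁶`, so only the rational constant term of its cofactor is seen. -/
lemma lineMap_coeff_six_of_mem {p : P3} (hp : p ∈ Jid) :
    ∃ r : ℚ, ∀ ζ : ℂ, ζ ^ 2 + ζ + 1 = 0 → (lineMap ζ p).coeff 6 = 3 * algebraMap ℚ ℂ r := by
  obtain ⟨u, q, hq, hp'⟩ := Ideal.mem_span_insert.mp hp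
  obtain ⟨v, q', hq', hq''⟩ := Ideal.mem_span_insert.mp hq
  obtain ⟨w, hw⟩ := Ideal.mem_span_singleton'.mp hq'
  refine ⟨constantCoeff w, fun ζ h => ?_⟩
  have e : lineMap ζ p =
      lineMap ζ u * 0 + (lineMap ζ v * 0 + lineMap ζ w * (3 * Polynomial.X ^ 6)) := by
    rw [hp', hq'', ← hw, map_add, map_add, map_mul, map_mul, map_mul, lineMap_lin h, lineMap_quad h,
      lineMap_sextic h]
  rw [e, coeff_six_aux, lineMap_coeff_zero]

/-- Along `(T, ζT, ζ²T)` the monomial `x⁵y` restricts to `ζT⁶`, whose coefficient distinguishes the two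
primitive cube roots of unity; so `x⁵y ∉ J`. -/
lemma mkA_top_ne_zero : mkA (X 0 ^ 5 * X 1) ≠ 0 := by
  intro h0
  have hmem : (X 0 ^ 5 * X 1 : P3) ∈ Jid := Ideal.Quotient.eq_zero_iff_mem.mp h0
  obtain ⟨s, hs⟩ : ∃ s : ℂ, s ^ 2 = -3 := IsAlgClosed.exists_pow_nat_eq _ (by norm_num)
  have h1 : ((-1 + s) / 2) ^ 2 + (-1 + s) / 2 + 1 = 0 := by linear_combination hs / 4
  have h2 : ((-1 - s) / 2) ^ 2 + (-1 - s) / 2 + 1 = 0 := by linear_combination hs / 4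
  obtain ⟨r, hr⟩ := lineMap_coeff_six_of_mem hmem
  have key : ∀ ζ : ℂ, (lineMap ζ (X 0 ^ 5 * X 1)).coeff 6 = ζ := by
    intro ζ
    have : lineMap ζ (X 0 ^ 5 * X 1) = Polynomial.C ζ * Polynomial.X ^ 6 := by
      simp [lineMap]; ring
    rw [this]; simp
  have e1 := hr _ h1
  have e2 := hr _ h2
  rw [key] at e1 e2
  have hs0 : s = 0 := by linear_combination e1 - e2
  rw [hs0] at hs
  norm_num at hs

/-- The linear map `f ↦ (f 0 − f 2, f 1 − f 2)`, whose kernel is spanned by `(1, 1, 1)`. -/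
def coordFun : (Fin 3 → ℚ) →ₗ[ℚ] (Fin 2 → ℚ) where
  toFun f := ![f 0 - f 2, f 1 - f 2]
  map_add' f g := by ext i; fin_cases i <;> simp <;> ring
  map_smul' r f := by ext i; fin_cases i <;> simp <;> ring

/-- Coordinates on `V = ⟨α, β, γ⟩ / (α + β + γ)` with respect to the basis `α, β`. -/
def coordV : Vq →ₗ[ℚ] (Fin 2 → ℚ) :=
  Vsub.liftQ coordFun (by
    rw [Vsub, Submodule.span_le]
    rintro v rfl
    rw [SetLike.mem_coe, LinearMap.mem_ker]
    ext i
    fin_cases i <;> simp [coordFun])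

lemma coordV_vGen_zero : coordV (vGen 0) = ![1, 0] := by
  have : coordV (vGen 0) = coordFun (Pi.single 0 1) := rfl
  rw [this]; ext i; fin_cases i <;> simp [coordFun]

lemma coordV_vGen_one : coordV (vGen 1) = ![0, 1] := by
  have : coordV (vGen 1) = coordFun (Pi.single 1 1) := rfl
  rw [this]; ext i; fin_cases i <;> simp [coordFun]

/-- The determinant in the coordinates `coordV` is an alternating form taking the value `1` on
`(α, β)`; it extends to a linear functional on the exterior algebra. -/
lemma e_top_ne_zero : eGen 1 0 0 * eGen 1 0 1 ≠ 0 := by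
  intro h
  let D : (Fin 1 → Vq) [⋀^Fin 2]→ₗ[ℚ] ℚ :=
    (Matrix.detRowAlternating (n := Fin 2) (R := ℚ)).compLinearMap
      (coordV.comp (LinearMap.proj 0))
  let F : ∀ i, (Fin 1 → Vq) [⋀^Fin i]→ₗ[ℚ] ℚ := fun i =>
    if h : i = 2 then h ▸ D else 0
  have h2 : ExteriorAlgebra.ιMulti ℚ 2
      ![Pi.single (0 : Fin 1) (vGen 0), Pi.single (0 : Fin 1) (vGen 1)] =
      eGen 1 0 0 * eGen 1 0 1 := by
    simp [ExteriorAlgebra.ιMulti_apply, eGen]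
  have := ExteriorAlgebra.liftAlternating_apply_ιMulti F
    ![Pi.single (0 : Fin 1) (vGen 0), Pi.single (0 : Fin 1) (vGen 1)]
  rw [h2, h, map_zero] at this
  have h3 : F 2 = D := by simp [F]
  rw [h3] at this
  have h4 : ∀ v : Fin 2 → Fin 1 → Vq, D v =
      coordV (v 0 0) 0 * coordV (v 1 0) 1 - coordV (v 0 0) 1 * coordV (v 1 0) 0 := fun v =>
    Matrix.det_fin_two (Matrix.of fun i => coordV (v i 0))
  rw [h4] at this
  simp [coordV_vGen_zero, coordV_vGen_one] at this

end NonVanishing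

/-! ### Generators of `A` and of the exterior algebra, and the action on them -/

section Generators

/-- The class of the `i`-th variable in `A`. -/
def xA (i : Fin 3) : Aq := mkA (X i)

/-- The generator `α`, `β` or `γ` of the exterior algebra `E(1)`, according to `i`. -/
abbrev e (i : Fin 3) : Em 1 := eGen 1 0 i

lemma mkA_eq_zero_of_mem_gens {f : P3}
    (h : f ∈ ({X 0 + X 1 + X 2, X 0 ^ 2 + X 1 ^ 2 + X 2 ^ 2, X 0 ^ 6 + X 1 ^ 6 + X 2 ^ 6} : Set P3)) :
    mkA f = 0 :=
  Ideal.Quotient.eq_zero_iff_mem.mpr (Ideal.subset_span h)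

lemma xA_lin : xA 0 + xA 1 + xA 2 = 0 := by
  exact mkA_eq_zero_of_mem_gens (f := X 0 + X 1 + X 2) (by simp)

lemma xA_quad : xA 0 ^ 2 + xA 1 ^ 2 + xA 2 ^ 2 = 0 := by
  exact mkA_eq_zero_of_mem_gens (f := X 0 ^ 2 + X 1 ^ 2 + X 2 ^ 2) (by simp)

lemma xA_sextic : xA 0 ^ 6 + xA 1 ^ 6 + xA 2 ^ 6 = 0 := by
  exact mkA_eq_zero_of_mem_gens (f := X 0 ^ 6 + X 1 ^ 6 + X 2 ^ 6) (by simp)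

lemma xA_pow_six (i : Fin 3) : xA i ^ 6 = 0 := by
  have h1 := xA_lin
  have h2 := xA_quad
  have h6 := xA_sextic
  fin_cases i
  · exact sixth_zero h1 h2 h6
  · exact sixth_zero (a := xA 1) (b := xA 2) (c := xA 0) (by linear_combination h1)
      (by linear_combination h2) (by linear_combination h6)
  · exact sixth_zero (a := xA 2) (b := xA 0) (c := xA 1) (by linear_combination h1)
      (by linear_combination h2) (by linear_combination h6)

lemma vGen_sum : vGen 0 + vGen 1 + vGen 2 = 0 := by
  have : vGen 0 + vGen 1 + vGen 2 =
      Submodule.Quotient.mk (p := Vsub) (Pi.single 0 1 + Pi.single 1 1 + Pi.single 2 1) := rfl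
  rw [this, Submodule.Quotient.mk_eq_zero]
  refine Submodule.subset_span ?_
  rw [Set.mem_singleton_iff]
  ext i
  fin_cases i <;> simp

lemma e_sum : e 0 + e 1 + e 2 = 0 := by
  simp only [e, eGen, ← map_add, ← Pi.single_add, vGen_sum, Pi.single_zero, map_zero]

lemma e_sq (i : Fin 3) : e i * e i = 0 := ExteriorAlgebra.ι_sq_zero _

lemma e_swap (i j : Fin 3) : e i * e j = - (e j * e i) :=
  eq_neg_of_add_eq_zero_left (ExteriorAlgebra.ι_add_mul_swap _ _)

lemma e_two : e 2 = - e 0 - e 1 := by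
  have := e_sum
  rw [← sub_eq_zero, ← this]; abel

lemma e_one_zero : e 1 * e 0 = - (e 0 * e 1) := e_swap 1 0

lemma e_one_two : e 1 * e 2 = e 0 * e 1 := by
  rw [e_two, mul_sub, mul_neg, e_sq, e_one_zero]; simp

lemma e_two_zero : e 2 * e 0 = e 0 * e 1 := by
  rw [e_two, sub_mul, neg_mul, e_sq, e_one_zero]; simp

lemma e_two_one : e 2 * e 1 = - (e 0 * e 1) := by rw [e_swap, e_one_two]

lemma e_zero_two : e 0 * e 2 = - (e 0 * e 1) := by rw [e_swap, e_two_zero]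

lemma e_mul_mem (i j : Fin 3) : ∃ r : ℚ, e i * e j = r • (e 0 * e 1) := by
  fin_cases i <;> fin_cases j
  · exact ⟨0, by rw [zero_smul]; exact e_sq 0⟩
  · exact ⟨1, by rw [one_smul]; rfl⟩
  · exact ⟨-1, by rw [neg_one_smul]; exact e_zero_two⟩
  · exact ⟨-1, by rw [neg_one_smul]; exact e_one_zero⟩
  · exact ⟨0, by rw [zero_smul]; exact e_sq 1⟩
  · exact ⟨1, by rw [one_smul]; exact e_one_two⟩
  · exact ⟨1, by rw [one_smul]; exact e_two_zero⟩
  · exact ⟨-1, by rw [neg_one_smul]; exact e_two_one⟩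
  · exact ⟨0, by rw [zero_smul]; exact e_sq 2⟩

lemma e_top_mul (l : Fin 3) : e 0 * e 1 * e l = 0 := by
  fin_cases l
  · change e 0 * e 1 * e 0 = 0
    rw [mul_assoc, e_one_zero, mul_neg, ← mul_assoc, e_sq]; simp
  · change e 0 * e 1 * e 1 = 0
    rw [mul_assoc, e_sq]; simp
  · change e 0 * e 1 * e 2 = 0
    rw [mul_assoc, e_one_two, ← mul_assoc, e_sq]; simp

/-- The action of the permutation `σ` on the exterior factor of `K(1)`. -/
def permE (σ : Equiv.Perm (Fin 3)) : Em 1 →ₐ[ℚ] Em 1 :=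
  extHom (LinearMap.compLeft (permV σ) (Fin 1))

lemma permE_e (σ : Equiv.Perm (Fin 3)) (i : Fin 3) : permE σ (e i) = e (σ i) := by
  have h : permV σ (vGen i) = vGen (σ i) := by
    have : permV σ (vGen i) =
        Submodule.Quotient.mk (p := Vsub) (LinearMap.funLeft ℚ ℚ ⇑σ⁻¹ (Pi.single i 1)) := rfl
    rw [this, vGen]
    congr 1
    ext j
    rw [LinearMap.funLeft_apply, Pi.single_apply, Pi.single_apply]
    congr 1
    rw [Equiv.Perm.inv_eq_iff_eq, eq_comm, eq_comm (a := j)]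
  rw [permE, extHom, e, eGen, ExteriorAlgebra.lift_ι_apply, LinearMap.comp_apply]
  change ExteriorAlgebra.ι ℚ _ = ExteriorAlgebra.ι ℚ _
  rw [← h]
  congr 1
  ext j
  fin_cases j
  simp

lemma permK_tmul (σ : Equiv.Perm (Fin 3)) (f : P3) (t : Em 1) :
    permK 1 σ (mkA f ⊗ₜ t) = mkA (rename σ f) ⊗ₜ permE σ t := rfl

lemma negE_prod (l : List (Fin 1 × Fin 3)) :
    extHom (-LinearMap.id) (l.map fun pr => eGen 1 pr.1 pr.2).prod =
      (-1 : ℚ) ^ l.length • (l.map fun pr => eGen 1 pr.1 pr.2).prod := by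
  induction l with
  | nil => simp
  | cons a l ih =>
    have : extHom (-LinearMap.id) (eGen 1 a.1 a.2) = - eGen 1 a.1 a.2 := by
      rw [extHom, eGen, ExteriorAlgebra.lift_ι_apply]; simp
    rw [List.map_cons, List.prod_cons, map_mul, ih, this, List.length_cons, pow_succ]
    simp

/-- The sign automorphism acts on bidegree `(2k, q)` by `(−1)^(k + q)`. -/
lemma negK_component {p k q : ℕ} (hp : p = 2 * k) {z : Kk 1} (hz : z ∈ component 1 p q) :
    negK 1 z = (-1 : ℚ) ^ (k + q) • z := by
  induction hz using Submodule.span_induction with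
  | zero => simp
  | add x y _ _ hx hy => rw [map_add, hx, hy, smul_add]
  | smul r x _ hx => rw [map_smul, hx, smul_comm]
  | mem x hx =>
    obtain ⟨a, b, c, l, h1, h2, rfl⟩ := hx
    have hn : negAq (mkA (X 0 ^ a * X 1 ^ b * X 2 ^ c)) =
        (-1 : ℚ) ^ (a + b + c) • mkA (X 0 ^ a * X 1 ^ b * X 2 ^ c) := by
      have h : negAq (mkA (X 0 ^ a * X 1 ^ b * X 2 ^ c)) =
        mkA (negP (X 0 ^ a * X 1 ^ b * X 2 ^ c)) := rfl
      rw [h, ← map_smul]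
      congr 1
      simp only [negP, map_mul, map_pow, aeval_X]
      rw [Algebra.smul_def, neg_pow (X 0 : P3), neg_pow (X 1 : P3), neg_pow (X 2 : P3), map_pow,
        map_neg, map_one]
      ring
    rw [negK, Algebra.TensorProduct.map_tmul, negE_prod, hn, TensorProduct.smul_tmul_smul, h2,
      ← pow_add]
    congr 2
    omega

end Generators

/-! ### The Reynolds sum and the upper bounds -/

section Reynolds

/-- The antisymmetric (under `y ↔ w`) spanning element `x^(k-1)(y − w)` of degree `k`; it is `0` for
`k = 0`. -/
def dP : ℕ → P3
  | 0 => 0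
  | k + 1 => X 0 ^ k * (X 1 - X 2)

/-- The span of `x^k` and `x^(k-1)(y − w)` in `A`; it contains every monomial of degree `k`
(`monomial_mem_S`). -/
def S (k : ℕ) : Submodule ℚ Aq := Submodule.span ℚ {mkA (X 0 ^ k), mkA (dP k)}

lemma mkA_pow (i : Fin 3) (k : ℕ) : mkA (X i ^ k) = xA i ^ k := rfl

lemma mkA_mul (f g : P3) : mkA (f * g) = mkA f * mkA g := rfl

lemma mkA_dP_succ (k : ℕ) : mkA (dP (k + 1)) = xA 0 ^ k * (xA 1 - xA 2) := rfl

lemma mkA_dP_zero : mkA (dP 0) = 0 := rfl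

/-- Membership in `S k` with half-integral coefficients, cleared of denominators. -/
lemma mem_S_of {k : ℕ} {t : Aq} (m n : ℤ)
    (h : 2 * t = m * mkA (X 0 ^ k) + n * mkA (dP k)) : t ∈ S k := by
  refine Submodule.mem_span_pair.mpr ⟨m / 2, n / 2, ?_⟩
  have h2 : t = (1 / 2 : ℚ) • (2 * t) := by
    rw [two_mul, ← two_smul ℚ t, smul_smul]; norm_num
  rw [h2, h, smul_add, ← zsmul_eq_mul, ← zsmul_eq_mul, ← Int.cast_smul_eq_zsmul ℚ,
    ← Int.cast_smul_eq_zsmul ℚ, smul_smul, smul_smul]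
  congr 2 <;> ring

lemma xA_mul_mem_S (i : Fin 3) {k : ℕ} {t : Aq} (ht : t ∈ S k) : xA i * t ∈ S (k + 1) := by
  have h1 := xA_lin
  have r := quad_rel xA_lin xA_quad
  have r' : xA 2 = - xA 0 - xA 1 := by linear_combination h1
  obtain ⟨p, q, rfl⟩ := Submodule.mem_span_pair.mp ht
  rw [mul_add, mul_smul_comm, mul_smul_comm]
  refine add_mem (Submodule.smul_mem _ _ ?_) (Submodule.smul_mem _ _ ?_)
  · rw [mkA_pow]
    fin_cases i
    · apply mem_S_of 2 0
      rw [mkA_pow, mkA_dP_succ]; push_cast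
      ring
    · apply mem_S_of (-1) 1
      rw [mkA_pow, mkA_dP_succ]; push_cast
      linear_combination xA 0 ^ k * h1
    · apply mem_S_of (-1) (-1)
      rw [mkA_pow, mkA_dP_succ]; push_cast
      linear_combination xA 0 ^ k * h1
  · cases k with
    | zero => rw [mkA_dP_zero, mul_zero]; exact zero_mem _
    | succ k =>
      rw [mkA_dP_succ]
      fin_cases i
      · apply mem_S_of 0 2
        rw [mkA_pow, mkA_dP_succ]; push_cast
        ring
      · apply mem_S_of (-3) (-1)
        rw [mkA_pow, mkA_dP_succ]; push_cast
        rw [r']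
        linear_combination 4 * xA 0 ^ k * r
      · apply mem_S_of 3 (-1)
        rw [mkA_pow, mkA_dP_succ]; push_cast
        rw [r']
        linear_combination (-4) * xA 0 ^ k * r

lemma xA_pow_mul_mem_S (i : Fin 3) (n : ℕ) {k : ℕ} {t : Aq} (ht : t ∈ S k) :
    xA i ^ n * t ∈ S (n + k) := by
  induction n with
  | zero => simpa using ht
  | succ n ih =>
    rw [pow_succ', mul_assoc, show n + 1 + k = n + k + 1 by ring]
    exact xA_mul_mem_S i ih

lemma one_mem_S : (1 : Aq) ∈ S 0 := by
  have h : mkA (X 0 ^ 0) ∈ S 0 := Submodule.subset_span (Or.inl rfl)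
  rwa [mkA_pow, pow_zero] at h

lemma mkA_monomial (i j l : Fin 3) (a b c : ℕ) :
    mkA (X i ^ a * X j ^ b * X l ^ c) = xA i ^ a * (xA j ^ b * (xA l ^ c * 1)) := by
  rw [mkA_mul, mkA_mul, mkA_pow, mkA_pow, mkA_pow, mul_one, mul_assoc]

lemma monomial_mem_S (i j l : Fin 3) (a b c : ℕ) :
    mkA (X i ^ a * X j ^ b * X l ^ c) ∈ S (a + b + c) := by
  have h := xA_pow_mul_mem_S i a (xA_pow_mul_mem_S j b (xA_pow_mul_mem_S l c one_mem_S))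
  rwa [← mkA_monomial, add_zero, ← add_assoc] at h

/-- The Reynolds sum over `S₃` (not divided by the order of the group). -/
def rey : Kk 1 →ₗ[ℚ] Kk 1 := ∑ σ : Equiv.Perm (Fin 3), (permK 1 σ).toLinearMap

lemma rey_tmul (f : P3) (t : Em 1) :
    rey (mkA f ⊗ₜ t) = ∑ σ : Equiv.Perm (Fin 3), mkA (rename σ f) ⊗ₜ[ℚ] permE σ t := by
  rw [rey, LinearMap.sum_apply]
  exact Finset.sum_congr rfl fun σ _ => permK_tmul σ f t

lemma rey_of_inv {z : Kk 1} (hz : z ∈ invD6Submodule 1) : rey z = (6 : ℚ) • z := by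
  have h : ∀ σ : Equiv.Perm (Fin 3), (permK 1 σ).toLinearMap z = z := fun σ => hz.1 σ
  rw [rey, LinearMap.sum_apply, Finset.sum_congr rfl fun σ _ => h σ, Finset.sum_const,
    Finset.card_univ, Fintype.card_perm, ← Nat.cast_smul_eq_nsmul ℚ]
  norm_num [Nat.factorial]

/-- A sum over `S₃` written out; the first four permutations are the identity and the
transpositions, the last two the three-cycles. -/
lemma sum_perm {M : Type*} [AddCommMonoid M] (G : Fin 3 → Fin 3 → Fin 3 → M) :
    ∑ σ : Equiv.Perm (Fin 3), G (σ 0) (σ 1) (σ 2) =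
      G 0 1 2 + G 1 0 2 + G 2 1 0 + G 0 2 1 + G 1 2 0 + G 2 0 1 := by
  have h : (Finset.univ : Finset (Equiv.Perm (Fin 3))) =
      {1, Equiv.swap 0 1, Equiv.swap 0 2, Equiv.swap 1 2, finRotate 3, finRotate 3 * finRotate 3} := by
    decide
  rw [h, Finset.sum_insert (by decide), Finset.sum_insert (by decide),
    Finset.sum_insert (by decide), Finset.sum_insert (by decide),
    Finset.sum_insert (by decide), Finset.sum_singleton]
  simp only [← add_assoc]
  rfl

/-- The element `x^(k-1)(y − w) + y^(k-1)(w − x) + w^(k-1)(x − y)` of `A`, and `0` for `k = 0`. It is the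
coefficient of `α ∧ β` in the symmetrization of `x^(k-1)(y − w) ⊗ α ∧ β`. -/
def W : ℕ → Aq
  | 0 => 0
  | k + 1 => xA 0 ^ k * (xA 1 - xA 2) + xA 1 ^ k * (xA 2 - xA 0) + xA 2 ^ k * (xA 0 - xA 1)

/-- The invariant `x^k ⊗ α + y^k ⊗ β + w^k ⊗ γ`. -/
def Z (k : ℕ) : Kk 1 := (xA 0 ^ k) ⊗ₜ e 0 + (xA 1 ^ k) ⊗ₜ e 1 + (xA 2 ^ k) ⊗ₜ e 2

lemma mkA_rename_pow (σ : Equiv.Perm (Fin 3)) (k : ℕ) :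
    mkA (rename σ (X 0 ^ k)) = xA (σ 0) ^ k := by
  rw [map_pow, rename_X]; rfl

lemma mkA_rename_dP (σ : Equiv.Perm (Fin 3)) (k : ℕ) :
    mkA (rename σ (dP (k + 1))) = xA (σ 0) ^ k * (xA (σ 1) - xA (σ 2)) := by
  rw [dP, map_mul, map_sub, map_pow, rename_X, rename_X, rename_X]; rfl

lemma rey_pow_one (k : ℕ) :
    rey (mkA (X 0 ^ k) ⊗ₜ 1) = (2 : ℚ) • ((xA 0 ^ k + xA 1 ^ k + xA 2 ^ k) ⊗ₜ 1) := by
  simp only [rey_tmul, mkA_rename_pow, map_one]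
  rw [sum_perm fun i _ _ => (xA i ^ k) ⊗ₜ[ℚ] (1 : Em 1)]
  simp only [TensorProduct.add_tmul, two_smul]
  abel

lemma rey_d_one (k : ℕ) : rey (mkA (dP k) ⊗ₜ 1) = 0 := by
  cases k with
  | zero => rw [mkA_dP_zero, TensorProduct.zero_tmul, map_zero]
  | succ k =>
    simp only [rey_tmul, mkA_rename_dP, map_one]
    rw [sum_perm fun i j l => (xA i ^ k * (xA j - xA l)) ⊗ₜ[ℚ] (1 : Em 1)]
    simp only [mul_sub, TensorProduct.sub_tmul]
    abel

lemma rey_pow_e (k : ℕ) : rey (mkA (X 0 ^ k) ⊗ₜ e 0) = (2 : ℚ) • Z k := by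
  simp only [rey_tmul, mkA_rename_pow, permE_e]
  rw [sum_perm fun i _ _ => (xA i ^ k) ⊗ₜ[ℚ] e i, Z]
  simp only [two_smul]
  abel

lemma rey_d_e (k : ℕ) : rey (mkA (dP k) ⊗ₜ e 0) = 0 := by
  cases k with
  | zero => rw [mkA_dP_zero, TensorProduct.zero_tmul, map_zero]
  | succ k =>
    simp only [rey_tmul, mkA_rename_dP, permE_e]
    rw [sum_perm fun i j l => (xA i ^ k * (xA j - xA l)) ⊗ₜ[ℚ] e i]
    simp only [mul_sub, TensorProduct.sub_tmul]
    abel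

lemma rey_pow_ee (k : ℕ) : rey (mkA (X 0 ^ k) ⊗ₜ (e 0 * e 1)) = 0 := by
  simp only [rey_tmul, mkA_rename_pow, map_mul, permE_e]
  rw [sum_perm fun i j _ => (xA i ^ k) ⊗ₜ[ℚ] (e i * e j)]
  simp only [e_one_zero, e_one_two, e_two_one, e_two_zero, e_zero_two, TensorProduct.tmul_neg]
  abel

lemma rey_d_ee (k : ℕ) : rey (mkA (dP k) ⊗ₜ (e 0 * e 1)) = (2 : ℚ) • (W k ⊗ₜ (e 0 * e 1)) := by
  cases k with
  | zero => rw [mkA_dP_zero, W, TensorProduct.zero_tmul, map_zero, smul_zero]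
  | succ k =>
    simp only [rey_tmul, mkA_rename_dP, map_mul, permE_e]
    rw [sum_perm fun i j l => (xA i ^ k * (xA j - xA l)) ⊗ₜ[ℚ] (e i * e j), W]
    simp only [e_one_zero, e_one_two, e_two_one, e_two_zero, e_zero_two, TensorProduct.tmul_neg,
      mul_sub, TensorProduct.sub_tmul, TensorProduct.add_tmul, two_smul]
    abel

/-- The Reynolds sum is unchanged by moving the exterior generator `e i` to `e 0` with a
transposition. -/
lemma rey_reindex (i : Fin 3) (f : P3) :
    rey (mkA f ⊗ₜ e i) = rey (mkA (rename (Equiv.swap 0 i) f) ⊗ₜ e 0) := by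
  rw [rey_tmul, rey_tmul, ← Equiv.sum_comp (Equiv.mulRight (Equiv.swap 0 i))]
  refine Finset.sum_congr rfl fun σ _ => ?_
  rw [rename_rename, permE_e, permE_e, Equiv.coe_mulRight, Equiv.Perm.mul_apply,
    Equiv.swap_apply_right, Equiv.Perm.coe_mul]

lemma rey_mem_of_S {k : ℕ} {a : Aq} (ha : a ∈ S k) (t : Em 1) (V : Submodule ℚ (Kk 1))
    (h1 : rey (mkA (X 0 ^ k) ⊗ₜ t) ∈ V) (h2 : rey (mkA (dP k) ⊗ₜ t) ∈ V) : rey (a ⊗ₜ t) ∈ V := by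
  obtain ⟨p, q, rfl⟩ := Submodule.mem_span_pair.mp ha
  rw [TensorProduct.add_tmul, ← TensorProduct.smul_tmul', ← TensorProduct.smul_tmul', map_add,
    map_smul, map_smul]
  exact add_mem (V.smul_mem _ h1) (V.smul_mem _ h2)

/-- Invariants are fixed by `rey / 6`, so a subspace containing the Reynolds sums of a component
contains its invariants. -/
lemma inf_le_of_rey {p q : ℕ} {V : Submodule ℚ (Kk 1)} (h : component 1 p q ≤ V.comap rey) :
    component 1 p q ⊓ invD6Submodule 1 ≤ V := by
  rintro z ⟨hz, hi⟩
  have h1 : rey z ∈ V := h hz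
  rw [rey_of_inv hi] at h1
  exact (Submodule.smul_mem_iff V (by norm_num)).mp h1

lemma inf_le_zero (k : ℕ) : component 1 (2 * k) 0 ⊓ invD6Submodule 1 ≤
    Submodule.span ℚ {(xA 0 ^ k + xA 1 ^ k + xA 2 ^ k) ⊗ₜ[ℚ] (1 : Em 1)} := by
  refine inf_le_of_rey (Submodule.span_le.mpr ?_)
  rintro z ⟨a, b, c, l, h1, h2, rfl⟩
  obtain rfl := List.length_eq_zero_iff.mp h2
  obtain rfl : a + b + c = k := by omega
  change rey (mkA (X 0 ^ a * X 1 ^ b * X 2 ^ c) ⊗ₜ[ℚ] (1 : Em 1)) ∈ Submodule.span ℚ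
    {(xA 0 ^ (a + b + c) + xA 1 ^ (a + b + c) + xA 2 ^ (a + b + c)) ⊗ₜ[ℚ] (1 : Em 1)}
  refine rey_mem_of_S (monomial_mem_S 0 1 2 a b c) _ _ ?_ ?_
  · rw [rey_pow_one]
    exact Submodule.smul_mem _ _ (Submodule.mem_span_singleton_self _)
  · rw [rey_d_one]
    exact zero_mem _

lemma inf_le_one (k : ℕ) : component 1 (2 * k) 1 ⊓ invD6Submodule 1 ≤
    Submodule.span ℚ {Z k} := by
  refine inf_le_of_rey (Submodule.span_le.mpr ?_)
  rintro z ⟨a, b, c, l, h1, h2, rfl⟩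
  obtain ⟨⟨j, i⟩, rfl⟩ := List.length_eq_one_iff.mp h2
  obtain rfl : a + b + c = k := by omega
  obtain rfl : j = 0 := Subsingleton.elim _ _
  rw [List.map_singleton, List.prod_singleton]
  change rey (mkA (X 0 ^ a * X 1 ^ b * X 2 ^ c) ⊗ₜ[ℚ] e i) ∈ Submodule.span ℚ {Z (a + b + c)}
  rw [rey_reindex]
  simp only [map_mul (rename _), map_pow (rename _), rename_X]
  refine rey_mem_of_S (monomial_mem_S _ _ _ a b c) _ _ ?_ ?_
  · rw [rey_pow_e]
    exact Submodule.smul_mem _ _ (Submodule.mem_span_singleton_self _)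
  · rw [rey_d_e]
    exact zero_mem _

lemma inf_le_two (k : ℕ) : component 1 (2 * k) 2 ⊓ invD6Submodule 1 ≤
    Submodule.span ℚ {W k ⊗ₜ (e 0 * e 1)} := by
  refine inf_le_of_rey (Submodule.span_le.mpr ?_)
  rintro z ⟨a, b, c, l, h1, h2, rfl⟩
  obtain ⟨⟨j, i⟩, ⟨j', i'⟩, rfl⟩ := List.length_eq_two.mp h2
  obtain rfl : a + b + c = k := by omega
  obtain rfl : j = 0 := Subsingleton.elim _ _
  obtain rfl : j' = 0 := Subsingleton.elim _ _
  rw [List.map_cons, List.map_singleton, List.prod_cons, List.prod_singleton]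
  obtain ⟨r, hr⟩ := e_mul_mem i i'
  change rey (mkA (X 0 ^ a * X 1 ^ b * X 2 ^ c) ⊗ₜ[ℚ] (e i * e i')) ∈
    Submodule.span ℚ {W (a + b + c) ⊗ₜ[ℚ] (e 0 * e 1)}
  rw [hr, TensorProduct.tmul_smul, map_smul]
  refine Submodule.smul_mem _ _ ?_
  refine rey_mem_of_S (monomial_mem_S 0 1 2 a b c) _ _ ?_ ?_
  · rw [rey_pow_ee]
    exact zero_mem _
  · rw [rey_d_ee]
    exact Submodule.smul_mem _ _ (Submodule.mem_span_singleton_self _)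

/-- The exterior algebra on the two-dimensional space `V` vanishes from degree three on. -/
lemma component_three (p q : ℕ) : component 1 p (q + 3) = ⊥ := by
  rw [eq_bot_iff]
  refine Submodule.span_le.mpr ?_
  rintro z ⟨a, b, c, l, h1, h2, rfl⟩
  match l, h2 with
  | ⟨j, i⟩ :: ⟨j', i'⟩ :: ⟨j'', i''⟩ :: l, _ =>
    obtain rfl : j = 0 := Subsingleton.elim _ _
    obtain rfl : j' = 0 := Subsingleton.elim _ _
    obtain rfl : j'' = 0 := Subsingleton.elim _ _
    obtain ⟨r, hr⟩ := e_mul_mem i i'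
    have : e i * (e i' * (e i'' * (l.map fun pr => eGen 1 pr.1 pr.2).prod)) = 0 := by
      rw [← mul_assoc, hr, smul_mul_assoc, ← mul_assoc, e_top_mul, zero_mul, smul_zero]
    rw [List.map_cons, List.map_cons, List.map_cons, List.prod_cons, List.prod_cons,
      List.prod_cons, this, TensorProduct.tmul_zero]
    exact zero_mem _

end Reynolds

/-! ### Dimensions in each exterior degree -/

section Final

/-- The element `x⁵y ⊗ α ∧ β`, a generator of the top bidegree `(12, 2)`. -/
abbrev T : Kk 1 := mkA (X 0 ^ 5 * X 1) ⊗ₜ (e 0 * e 1)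

lemma T_ne_zero : T ≠ 0 := tmul_ne_zero_field mkA_top_ne_zero e_top_ne_zero

lemma tmul_sum_mul {A E : Type*} [CommRing A] [Algebra ℚ A] [Ring E] [Algebra ℚ E]
    (a b : Fin 3 → A) (u : Fin 3 → E) :
    (a 0 ⊗ₜ[ℚ] u 0 + a 1 ⊗ₜ[ℚ] u 1 + a 2 ⊗ₜ[ℚ] u 2) *
        (b 0 ⊗ₜ[ℚ] u 0 + b 1 ⊗ₜ[ℚ] u 1 + b 2 ⊗ₜ[ℚ] u 2) =
      (a 0 * b 0) ⊗ₜ[ℚ] (u 0 * u 0) + (a 0 * b 1) ⊗ₜ[ℚ] (u 0 * u 1) +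
      (a 0 * b 2) ⊗ₜ[ℚ] (u 0 * u 2) + (a 1 * b 0) ⊗ₜ[ℚ] (u 1 * u 0) +
      (a 1 * b 1) ⊗ₜ[ℚ] (u 1 * u 1) + (a 1 * b 2) ⊗ₜ[ℚ] (u 1 * u 2) +
      (a 2 * b 0) ⊗ₜ[ℚ] (u 2 * u 0) + (a 2 * b 1) ⊗ₜ[ℚ] (u 2 * u 1) +
      (a 2 * b 2) ⊗ₜ[ℚ] (u 2 * u 2) := by
  simp only [add_mul, mul_add, Algebra.TensorProduct.tmul_mul_tmul]
  abel

lemma Z_one_mul_Z_five : Z 1 * Z 5 = (-6 : ℚ) • T := by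
  have h : xA 0 * xA 1 ^ 5 - xA 0 * xA 2 ^ 5 - xA 1 * xA 0 ^ 5 + xA 1 * xA 2 ^ 5 +
      xA 2 * xA 0 ^ 5 - xA 2 * xA 1 ^ 5 = (-6 : ℚ) • mkA (X 0 ^ 5 * X 1) :=
    top_one xA_lin xA_quad xA_sextic
  rw [T, TensorProduct.smul_tmul', ← h, Z, Z]
  refine (tmul_sum_mul (fun i => xA i ^ 1) (fun i => xA i ^ 5) e).trans ?_
  simp only [pow_one, e_sq, e_one_zero,
    e_one_two, e_two_one, e_two_zero, e_zero_two, TensorProduct.tmul_neg, TensorProduct.tmul_zero,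
    TensorProduct.add_tmul, TensorProduct.sub_tmul]
  abel

/-- This single product shows at once that `1`, `Z 1`, `Z 5` and an invariant of bidegree `(12, 2)` are
nonzero. -/
lemma Z_one_mul_Z_five_ne_zero : Z 1 * Z 5 ≠ 0 := by
  rw [Z_one_mul_Z_five]
  exact smul_ne_zero (by norm_num) T_ne_zero

lemma one_ne_zero_of_ne_zero {R : Type*} [Ring R] {z : R} (hz : z ≠ 0) : (1 : R) ≠ 0 :=
  haveI := nontrivial_of_ne z 0 hz
  one_ne_zero

lemma Z_mem_component (k : ℕ) : Z k ∈ component 1 (2 * k) 1 := by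
  have h : ∀ i : Fin 3, (xA i ^ k) ⊗ₜ[ℚ] e i ∈ component 1 (2 * k) 1 := by
    intro i
    apply Submodule.subset_span
    fin_cases i
    · exact ⟨k, 0, 0, [(0, 0)], by ring, rfl, by simp [mkA_pow, e]⟩
    · exact ⟨0, k, 0, [(0, 1)], by ring, rfl, by simp [mkA_pow, e]⟩
    · exact ⟨0, 0, k, [(0, 2)], by ring, rfl, by simp [mkA_pow, e]⟩
  exact add_mem (add_mem (h 0) (h 1)) (h 2)

lemma mem_inv_of_even {k q : ℕ} {z : Kk 1} (hz : z ∈ component 1 (2 * k) q) (hk : Even (k + q))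
    (h : ∀ σ, permK 1 σ z = z) : z ∈ invD6Submodule 1 := by
  refine ⟨h, ?_⟩
  rw [negK_component rfl hz, hk.neg_one_pow, one_smul]

lemma permK_Z (σ : Equiv.Perm (Fin 3)) (k : ℕ) : permK 1 σ (Z k) = Z k := by
  have hZ : Z k = ∑ i, mkA (X i ^ k) ⊗ₜ[ℚ] e i := by rw [Fin.sum_univ_three]; rfl
  rw [hZ, map_sum]
  simp only [permK_tmul, map_pow (rename _), rename_X, permE_e]
  exact Equiv.sum_comp σ fun i => mkA (X i ^ k) ⊗ₜ[ℚ] e i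

lemma eq_zero_of_neg_one_smul {M : Type*} [AddCommMonoid M] [Module ℚ M] {z : M}
    (h : (-1 : ℚ) • z = z) : z = 0 := by
  have h2 : (2 : ℚ) • z = 0 := by
    calc (2 : ℚ) • z = z + z := two_smul ℚ z
      _ = (1 : ℚ) • z + (-1 : ℚ) • z := by rw [h, one_smul]
      _ = 0 := by rw [← add_smul]; norm_num
  calc z = (1 / 2 : ℚ) • (2 : ℚ) • z := by rw [smul_smul]; norm_num
    _ = 0 := by rw [h2, smul_zero]

lemma inf_bot_of_odd {k q : ℕ} (hk : Odd (k + q)) :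
    component 1 (2 * k) q ⊓ invD6Submodule 1 = ⊥ := by
  rw [eq_bot_iff]
  rintro z ⟨hz, hi⟩
  have h := hi.2
  rw [negK_component rfl hz, hk.neg_one_pow] at h
  exact eq_zero_of_neg_one_smul h

lemma component_odd {p : ℕ} (q : ℕ) (hp : Odd p) : component 1 p q = ⊥ := by
  rw [eq_bot_iff]
  refine Submodule.span_le.mpr ?_
  rintro z ⟨a, b, c, l, h1, -, -⟩
  obtain ⟨n, hn⟩ := hp
  omega

lemma finrank_one_of {P : Submodule ℚ (Kk 1)} {v w : Kk 1} (hle : P ≤ Submodule.span ℚ {v})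
    (hw : w ∈ P) (hw0 : w ≠ 0) : Module.finrank ℚ P = 1 := by
  obtain ⟨r, rfl⟩ := Submodule.mem_span_singleton.mp (hle hw)
  have hr : r ≠ 0 := by rintro rfl; simp at hw0
  have hv0 : v ≠ 0 := by rintro rfl; simp at hw0
  have : P = Submodule.span ℚ {v} := by
    refine le_antisymm hle ?_
    rw [Submodule.span_singleton_le_iff_mem]
    exact (Submodule.smul_mem_iff P hr).mp hw
  rw [this, finrank_span_singleton hv0]

lemma finrank_zero_of {P : Submodule ℚ (Kk 1)} {v : Kk 1} (hle : P ≤ Submodule.span ℚ {v})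
    (hv : v = 0) : Module.finrank ℚ P = 0 := by
  rw [hv, Submodule.span_zero_singleton, le_bot_iff] at hle
  rw [hle, finrank_bot]

lemma xA_pow_zero (i : Fin 3) (k : ℕ) : xA i ^ (k + 6) = 0 := by
  rw [pow_add, xA_pow_six, mul_zero]

lemma xA_cube (i : Fin 3) : xA i ^ 3 = xA 0 ^ 3 := by
  fin_cases i
  · rfl
  · exact cube_eq xA_lin xA_quad
  · exact cube_eq (b := xA 2) (c := xA 1) (by linear_combination xA_lin) (by linear_combination xA_quad)

lemma W_four : W 4 = 0 := by
  rw [W, xA_cube 1, xA_cube 2]; ring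

lemma Z_three : Z 3 = 0 := by
  rw [Z, xA_cube 1, xA_cube 2, ← TensorProduct.tmul_add, ← TensorProduct.tmul_add, e_sum,
    TensorProduct.tmul_zero]

lemma finrank_q_zero (k : ℕ) : Module.finrank ℚ ↥(component 1 (2 * k) 0 ⊓ invD6Submodule 1) =
    if k = 0 then 1 else 0 := by
  rcases Nat.even_or_odd k with hk | hk
  swap
  · rw [inf_bot_of_odd (q := 0) hk, finrank_bot, if_neg (by rintro rfl; simp at hk)]
  match k, hk with
  | 0, _ =>
    rw [if_pos rfl]
    have h1 : (1 : Kk 1) ∈ component 1 (2 * 0) 0 :=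
      Submodule.subset_span ⟨0, 0, 0, [], rfl, rfl, by simp; rfl⟩
    refine finrank_one_of (inf_le_zero 0) ⟨h1, mem_inv_of_even h1 (by simp) fun σ => (permK 1 σ).map_one'⟩ ?_
    exact one_ne_zero_of_ne_zero (R := Kk 1) (z := Z 1 * Z 5) Z_one_mul_Z_five_ne_zero
  | 1, h | 3, h | 5, h => exact absurd h (by decide)
  | 2, _ =>
    rw [if_neg (by decide)]
    exact finrank_zero_of (inf_le_zero 2) (by rw [xA_quad, TensorProduct.zero_tmul])
  | 4, _ =>
    rw [if_neg (by decide)]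
    exact finrank_zero_of (inf_le_zero 4)
        (by rw [p_four xA_lin xA_quad, TensorProduct.zero_tmul])
  | k + 6, _ =>
    rw [if_neg (by omega)]
    exact finrank_zero_of (inf_le_zero (k + 6)) (by simp [xA_pow_zero])

lemma finrank_q_one (k : ℕ) : Module.finrank ℚ ↥(component 1 (2 * k) 1 ⊓ invD6Submodule 1) =
    if k = 1 ∨ k = 5 then 1 else 0 := by
  rcases Nat.even_or_odd k with hk | hk
  · rw [inf_bot_of_odd hk.add_one, finrank_bot, if_neg (by rintro (rfl | rfl) <;> revert hk <;> decide)]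
  have hmem : Z k ∈ component 1 (2 * k) 1 ⊓ invD6Submodule 1 :=
    ⟨Z_mem_component k, mem_inv_of_even (Z_mem_component k) hk.add_one fun σ => permK_Z σ k⟩
  match k, hk, hmem with
  | 1, _, hmem =>
    exact finrank_one_of (inf_le_one 1) hmem
      (left_ne_zero_of_mul (M₀ := Kk 1) (a := Z 1) (b := Z 5) Z_one_mul_Z_five_ne_zero)
  | 0, h, _ | 2, h, _ | 4, h, _ => exact absurd h (by decide)
  | 3, _, _ =>
    rw [if_neg (by decide)]
    exact finrank_zero_of (inf_le_one 3) Z_three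
  | 5, _, hmem =>
    exact finrank_one_of (inf_le_one 5) hmem
      (right_ne_zero_of_mul (M₀ := Kk 1) (a := Z 1) (b := Z 5) Z_one_mul_Z_five_ne_zero)
  | k + 6, _, _ =>
    rw [if_neg (by omega)]
    exact finrank_zero_of (inf_le_one (k + 6)) (by simp [Z, xA_pow_zero])

lemma finrank_q_two (k : ℕ) : Module.finrank ℚ ↥(component 1 (2 * k) 2 ⊓ invD6Submodule 1) =
    if k = 6 then 1 else 0 := by
  rcases Nat.even_or_odd k with hk | hk
  swap
  · rw [inf_bot_of_odd (hk.add_even even_two), finrank_bot,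
      if_neg (by rintro rfl; revert hk; decide)]
  match k, hk with
  | 0, _ =>
    rw [if_neg (by decide)]
    exact finrank_zero_of (inf_le_two 0) (by rw [W, TensorProduct.zero_tmul])
  | 1, h | 3, h | 5, h => exact absurd h (by decide)
  | 2, _ =>
    rw [if_neg (by decide)]
    exact finrank_zero_of (inf_le_two 2)
        (by rw [show W 2 = 0 by rw [W]; ring, TensorProduct.zero_tmul])
  | 4, _ =>
    rw [if_neg (by decide)]
    exact finrank_zero_of (inf_le_two 4) (by rw [W_four, TensorProduct.zero_tmul])
  | 6, _ =>
    have hT : T ∈ component 1 (2 * 6) 2 :=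
      Submodule.subset_span ⟨5, 1, 0, [(0, 0), (0, 1)], rfl, rfl, by simp [T, e]⟩
    have hm : Z 1 * Z 5 ∈ component 1 (2 * 6) 2 := by
      rw [Z_one_mul_Z_five]; exact Submodule.smul_mem _ _ hT
    exact finrank_one_of (inf_le_two 6)
      ⟨hm, mem_inv_of_even hm (by decide) fun σ => by rw [map_mul, permK_Z, permK_Z]⟩
      Z_one_mul_Z_five_ne_zero
  | k + 7, _ =>
    rw [if_neg (by omega)]
    exact finrank_zero_of (inf_le_two (k + 7)) (by simp [W, xA_pow_zero])

end Final

/-- The invariant subalgebra `K(1)^{D₆}` has bigraded components of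
dimension one in bidegrees `(0,0)`, `(2,1)`, `(10,1)`, `(12,2)`, and zero elsewhere;
i.e. its Hilbert–Poincaré series is `1 + s²t + s¹⁰t + s¹²t²`. -/
theorem hilbert_series_K1_invariants (p q : ℕ) :
    Module.finrank ℚ ↥(component 1 p q ⊓ invD6Submodule 1) =
      if (p, q) = (0, 0) ∨ (p, q) = (2, 1) ∨ (p, q) = (10, 1) ∨ (p, q) = (12, 2) then 1
      else 0 := by
  rcases Nat.even_or_odd p with hp | hp
  swap
  · rw [component_odd q hp, bot_inf_eq, finrank_bot, if_neg]
    rintro (h | h | h | h) <;> obtain ⟨rfl, rfl⟩ := Prod.mk.inj h <;> revert hp <;> decide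
  obtain ⟨k, rfl⟩ := even_iff_two_dvd.mp hp
  match q with
  | 0 =>
    rw [finrank_q_zero]
    refine if_congr ?_ rfl rfl
    simp only [Prod.mk.injEq]
    grind
  | 1 =>
    rw [finrank_q_one]
    refine if_congr ?_ rfl rfl
    simp only [Prod.mk.injEq]
    grind
  | 2 =>
    rw [finrank_q_two]
    refine if_congr ?_ rfl rfl
    simp only [Prod.mk.injEq]
    grind
  | q + 3 =>
    rw [component_three, bot_inf_eq, finrank_bot, if_neg]
    simp only [Prod.mk.injEq]
    omega

end
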